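/- Let A be a unital complex Banach algebra and let e ∈ A be invertible with ‖e‖ ≤ 1 (so A_e is unital). If A is approximately biprojective, then A_e is approximately biprojective: there exists a net of continuous linear maps σ_i : A → A⊗A such that for all a, b ∈ A: (a·e)·σ_i(b) − σ_i(a·e·b) → 0 and σ_i(a·e·b) − σ_i(a)·(e·b) → 0 in A⊗A, and π_e(σ_i(a)) → a in A, where π_e : A⊗A → A is the linear map with π_e(x⊗y) = x·e·y. -/

import Mathlib

open Filter Topology TensorProduct

/-- The projective tensor seminorm on the algebraic tensor product `A ⊗[ℂ] A`:
the infimum of `∑ ‖xᵢ‖‖yᵢ‖` over all representations `z = ∑ xᵢ ⊗ yᵢ`. -/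
noncomputable def projSN {A : Type*} [NormedRing A] [NormedAlgebra ℂ A]
    (z : TensorProduct ℂ A A) : ℝ :=
  sInf {r : ℝ | ∃ (n : ℕ) (x y : Fin n → A),
    z = ∑ i, x i ⊗ₜ[ℂ] y i ∧ r = ∑ i, ‖x i‖ * ‖y i‖}

/-!
If `e * f = 1`, then `x ⊗ y ↦ x ⊗ f * y` is bounded for the projective seminorm, commutes with both
outer module actions, and is undone by the factor `e` in `π_e (x ⊗ y) = x * e * y`. Composing it
with the approximate splittings `ρᵢ` of `A` therefore gives approximate splittings of `A_e`.
-/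

section TensorProduct

variable {R : Type*} [CommSemiring R]

theorem lTensor_rTensor_comm_apply {M N P Q : Type*} [AddCommMonoid M] [AddCommMonoid N]
    [AddCommMonoid P] [AddCommMonoid Q] [Module R M] [Module R N] [Module R P] [Module R Q]
    (g : N →ₗ[R] Q) (f : M →ₗ[R] P) (z : M ⊗[R] N) :
    g.lTensor P (f.rTensor N z) = f.rTensor Q (g.lTensor M z) := by
  rw [← LinearMap.comp_apply, ← LinearMap.comp_apply, LinearMap.lTensor_comp_rTensor,
    LinearMap.rTensor_comp_lTensor]

variable {A M : Type*} [AddCommMonoid M] [Module R M]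

theorem lTensor_mulLeft_mulRight_comm_apply [NonUnitalSemiring A] [Module R A]
    [SMulCommClass R A A] [IsScalarTower R A A] (a b : A) (z : M ⊗[R] A) :
    (LinearMap.mulLeft R a).lTensor M ((LinearMap.mulRight R b).lTensor M z) =
      (LinearMap.mulRight R b).lTensor M ((LinearMap.mulLeft R a).lTensor M z) := by
  simp only [← LinearMap.lTensor_comp_apply, ← Module.End.mul_eq_comp,
    (LinearMap.commute_mulLeft_right (R := R) a b).eq]

theorem lTensor_mulLeft_lTensor_mulLeft_of_mul_eq_one [Semiring A] [Algebra R A]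
    {a b : A} (hab : a * b = 1) (z : M ⊗[R] A) :
    (LinearMap.mulLeft R a).lTensor M ((LinearMap.mulLeft R b).lTensor M z) = z := by
  rw [← LinearMap.lTensor_comp_apply, ← LinearMap.mulLeft_mul, hab, LinearMap.mulLeft_one,
    LinearMap.lTensor_id_apply]

end TensorProduct

section ProjectiveSeminorm

variable {A B : Type*} [NormedRing A] [NormedAlgebra ℂ A] [NormedRing B] [NormedAlgebra ℂ B]

theorem projSN_nonneg (z : A ⊗[ℂ] A) : 0 ≤ projSN z := by
  apply Real.sInf_nonneg
  rintro r ⟨n, x, y, -, rfl⟩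
  positivity

theorem projSN_sum_tmul_le {n : ℕ} (x y : Fin n → A) :
    projSN (∑ i, x i ⊗ₜ[ℂ] y i) ≤ ∑ i, ‖x i‖ * ‖y i‖ := by
  refine csInf_le ⟨0, ?_⟩ ⟨n, x, y, rfl, rfl⟩
  rintro r ⟨m, x', y', -, rfl⟩
  positivity

theorem le_mul_projSN {c C : ℝ} {z : A ⊗[ℂ] A} (hC : 0 ≤ C)
    (h : ∀ (n : ℕ) (x y : Fin n → A), z = ∑ i, x i ⊗ₜ[ℂ] y i → c ≤ C * ∑ i, ‖x i‖ * ‖y i‖) :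
    c ≤ C * projSN z := by
  obtain ⟨n, x, y, hz⟩ := TensorProduct.exists_sum_tmul_eq z
  rw [projSN, ← smul_eq_mul, ← Real.sInf_smul_of_nonneg hC]
  refine le_csInf (Set.Nonempty.smul_set ⟨_, n, x, y, hz, rfl⟩) ?_
  rintro _ ⟨_, ⟨n, x, y, hz, rfl⟩, rfl⟩
  exact h n x y hz

theorem projSN_map_le (S T : A →L[ℂ] B) (z : A ⊗[ℂ] A) :
    projSN (TensorProduct.map (S : A →ₗ[ℂ] B) (T : A →ₗ[ℂ] B) z) ≤ ‖S‖ * ‖T‖ * projSN z := by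
  refine le_mul_projSN (by positivity) fun n x y hz => ?_
  calc projSN (TensorProduct.map (S : A →ₗ[ℂ] B) (T : A →ₗ[ℂ] B) z)
      = projSN (∑ i, S (x i) ⊗ₜ[ℂ] T (y i)) := by simp [hz]
    _ ≤ ∑ i, ‖S (x i)‖ * ‖T (y i)‖ := projSN_sum_tmul_le _ _
    _ ≤ ∑ i, (‖S‖ * ‖x i‖) * (‖T‖ * ‖y i‖) := by
        gcongr <;> exact ContinuousLinearMap.le_opNorm _ _
    _ = ‖S‖ * ‖T‖ * ∑ i, ‖x i‖ * ‖y i‖ := by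
        simp only [Finset.mul_sum, mul_mul_mul_comm]

theorem projSN_lTensor_le (T : A →L[ℂ] A) (z : A ⊗[ℂ] A) :
    projSN ((T : A →ₗ[ℂ] A).lTensor A z) ≤ ‖T‖ * projSN z := by
  refine (projSN_map_le (.id ℂ A) T z).trans ?_
  refine mul_le_mul_of_nonneg_right ?_ (projSN_nonneg z)
  exact mul_le_of_le_one_left (norm_nonneg T) ContinuousLinearMap.norm_id_le

theorem tendsto_projSN_lTensor {ι : Type*} {l : Filter ι} {z : ι → A ⊗[ℂ] A} (T : A →L[ℂ] A)
    (hz : Tendsto (fun i => projSN (z i)) l (𝓝 0)) :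
    Tendsto (fun i => projSN ((T : A →ₗ[ℂ] A).lTensor A (z i))) l (𝓝 0) :=
  squeeze_zero (fun _ => projSN_nonneg _) (fun i => projSN_lTensor_le T (z i))
    (by simpa only [mul_zero] using hz.const_mul ‖T‖)

end ProjectiveSeminorm

theorem stmt10_general {A : Type*} [NormedRing A] [NormedAlgebra ℂ A] {e f : A}
    (hef : e * f = 1) {ι : Type*} {l : Filter ι} {ρ : ι → (A →ₗ[ℂ] A ⊗[ℂ] A)}
    (hbound : ∀ i, ∃ C : ℝ, ∀ a : A, projSN (ρ i a) ≤ C * ‖a‖)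
    (hleft : ∀ a b : A, Tendsto
      (fun i => projSN ((LinearMap.mulLeft ℂ a).rTensor A (ρ i b) - ρ i (a * b))) l (𝓝 0))
    (hright : ∀ a b : A, Tendsto
      (fun i => projSN (ρ i (b * a) - (LinearMap.mulRight ℂ a).lTensor A (ρ i b))) l (𝓝 0))
    (hmul : ∀ a : A, Tendsto (fun i => ‖LinearMap.mul' ℂ A (ρ i a) - a‖) l (𝓝 0)) :
    ∃ σ : ι → (A →ₗ[ℂ] A ⊗[ℂ] A),
      (∀ i, ∃ C : ℝ, ∀ a : A, projSN (σ i a) ≤ C * ‖a‖) ∧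
      (∀ a b : A, Tendsto
        (fun i => projSN ((LinearMap.mulLeft ℂ (a * e)).rTensor A (σ i b) -
          σ i (a * e * b))) l (𝓝 0)) ∧
      (∀ a b : A, Tendsto
        (fun i => projSN (σ i (a * e * b) -
          (LinearMap.mulRight ℂ (e * b)).lTensor A (σ i a))) l (𝓝 0)) ∧
      (∀ a : A, Tendsto
        (fun i => ‖LinearMap.mul' ℂ A
          ((LinearMap.mulLeft ℂ e).lTensor A (σ i a)) - a‖) l (𝓝 0)) := by
  let T : A →L[ℂ] A := ContinuousLinearMap.mul ℂ A f
  have hT : (T : A →ₗ[ℂ] A) = LinearMap.mulLeft ℂ f := rfl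
  refine ⟨fun i => (T : A →ₗ[ℂ] A).lTensor A ∘ₗ ρ i, fun i => ?_, fun a b => ?_, fun a b => ?_,
    fun a => ?_⟩
  · obtain ⟨C, hC⟩ := hbound i
    refine ⟨‖T‖ * C, fun a => (projSN_lTensor_le T _).trans ?_⟩
    rw [mul_assoc]
    exact mul_le_mul_of_nonneg_left (hC a) (norm_nonneg T)
  · simpa only [map_sub, lTensor_rTensor_comm_apply, LinearMap.comp_apply] using
      tendsto_projSN_lTensor T (hleft (a * e) b)
  · simpa only [hT, map_sub, lTensor_mulLeft_mulRight_comm_apply, LinearMap.comp_apply,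
      mul_assoc] using tendsto_projSN_lTensor T (hright (e * b) a)
  · simpa only [LinearMap.comp_apply, hT, lTensor_mulLeft_lTensor_mulLeft_of_mul_eq_one hef]
      using hmul a

/-- Let `A` be a unital complex Banach algebra and `e ∈ A`
invertible (with inverse `f`) with `‖e‖ ≤ 1`.  If `A` is approximately
biprojective, then `A_e` is approximately biprojective: there is a net of
continuous linear maps `σᵢ : A → A ⊗ A` with `(a*e)·σᵢ(b) − σᵢ(a*e*b) → 0`,
`σᵢ(a*e*b) − σᵢ(a)·(e*b) → 0` (projective tensor seminorm) and
`π_e(σᵢ(a)) → a`, where `π_e (x ⊗ y) = x*e*y`.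
(Continuity of a linear map into `A ⊗ A` is expressed as boundedness for the
projective seminorm.) -/
theorem stmt10 {A : Type*} [NormedRing A] [NormedAlgebra ℂ A] [CompleteSpace A]
    (e f : A) (he : ‖e‖ ≤ 1) (hef : e * f = 1) (hfe : f * e = 1)
    (hA : ∃ (ι : Type) (l : Filter ι), l.NeBot ∧
      ∃ ρ : ι → (A →ₗ[ℂ] TensorProduct ℂ A A),
        (∀ i, ∃ C : ℝ, ∀ a : A, projSN (ρ i a) ≤ C * ‖a‖) ∧
        (∀ a b : A, Tendsto
          (fun i => projSN (LinearMap.rTensor A (LinearMap.mulLeft ℂ a) (ρ i b) -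
            ρ i (a * b))) l (𝓝 0)) ∧
        (∀ a b : A, Tendsto
          (fun i => projSN (ρ i (b * a) -
            LinearMap.lTensor A (LinearMap.mulRight ℂ a) (ρ i b))) l (𝓝 0)) ∧
        (∀ a : A, Tendsto
          (fun i => ‖LinearMap.mul' ℂ A (ρ i a) - a‖) l (𝓝 0))) :
    ∃ (ι : Type) (l : Filter ι), l.NeBot ∧
      ∃ σ : ι → (A →ₗ[ℂ] TensorProduct ℂ A A),
        (∀ i, ∃ C : ℝ, ∀ a : A, projSN (σ i a) ≤ C * ‖a‖) ∧
        (∀ a b : A, Tendsto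
          (fun i => projSN (LinearMap.rTensor A (LinearMap.mulLeft ℂ (a * e)) (σ i b) -
            σ i (a * e * b))) l (𝓝 0)) ∧
        (∀ a b : A, Tendsto
          (fun i => projSN (σ i (a * e * b) -
            LinearMap.lTensor A (LinearMap.mulRight ℂ (e * b)) (σ i a))) l (𝓝 0)) ∧
        (∀ a : A, Tendsto
          (fun i => ‖LinearMap.mul' ℂ A
            (LinearMap.lTensor A (LinearMap.mulLeft ℂ e) (σ i a)) - a‖) l (𝓝 0)) := by
  obtain ⟨ι, l, hl, ρ, hbound, hleft, hright, hmul⟩ := hA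
  exact ⟨ι, l, hl, stmt10_general hef hbound hleft hright hmul⟩
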